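/- Let M : ℝ² → ℝ be smooth with all partial derivatives up to order 9 square-integrable on ℝ², and let Ω := {x=(x₁,x₂,x₃)∈ℝ³ : x₁ > M(x₂,x₃)}. For every p with 2 ≤ p < 6 there exists a constant C > 0 (depending only on p and M) such that for every continuously differentiable f : closure(Ω) → ℝ with ∫_Ω |f|² dx < ∞ and ∫_Ω |∇f|² dx < ∞, one has (∫_Ω |f|^p dx)^{1/p} ≤ C ( ∫_Ω |f|² dx + ∫_Ω |∇f|² dx )^{1/2}. -/

import Mathlib

/- STATEMENT 3: Sobolev embedding L^p(Ω) ⊂ H¹(Ω) for 2 ≤ p < 6 on the perturbed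
half-space Ω = {x ∈ ℝ³ : x₁ > M(x₂,x₃)}. -/

noncomputable section

open MeasureTheory Real Set Filter
open scoped ENNReal

abbrev E3 : Type := EuclideanSpace ℝ (Fin 3)
abbrev E2 : Type := EuclideanSpace ℝ (Fin 2)

/-- Projection on the tangential variables `x' = (x₂, x₃)`. -/
def proj2 (x : E3) : E2 := (WithLp.equiv 2 (Fin 2 → ℝ)).symm ![x 1, x 2]

/-- The perturbed half-space `Ω = {x : x₁ > M(x₂,x₃)}`. -/
def Omg (M : E2 → ℝ) : Set E3 := {x : E3 | M (proj2 x) < x 0}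

/-!
Square-integrability of the derivatives of `M` up to order three gives `W^{2,2}(ℝ²) ⊂ L^∞` for `∇M`,
so `M` is Lipschitz. Hence `Ω` lies inside itself after a translation along any vector of an upward
cone, and there is a basis of `ℝ³` made of such vectors. In the coordinates of this basis every
coordinate half-line issuing forward from a point of `Ω` stays in `Ω`, so the Gagliardo–Nirenberg
argument needs no extension operator: bounding `|g|` by an integral of `|g| + |∇g|` along each of
the `d` half-lines gives `W^{1,1}(Ω) ⊂ L^{d/(d-1)}(Ω)`.

Applied to `g = |f|^{1 + r/2}`, Cauchy–Schwarz turns this into a passage from `L^r` to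
`L^{(1 + r/2) d/(d-1)}` for `f ∈ H¹(Ω)`. The bound `‖f‖_r ≤ A ‖f‖_{H¹}` is reproduced with the same
`A`, and the exponent strictly increases below the fixed point `2d/(d-2)`. As the exponents with a
given bound form a closed interval (Hölder and Fatou), starting from `r = 2` every exponent up to
and including `2d/(d-2)` is reached; for `d = 3` this is `6`.
-/

open scoped NNReal Topology

lemma enorm_add_enorm_fderiv_comp_le {E E' V : Type*} [NormedAddCommGroup E] [NormedSpace ℝ E]
    [NormedAddCommGroup E'] [NormedSpace ℝ E'] [NormedAddCommGroup V] [NormedSpace ℝ V]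
    {g : E → V} {T : E' →L[ℝ] E} {y : E'} (hg : DifferentiableAt ℝ g (T y)) :
    ‖g (T y)‖ₑ + ‖fderiv ℝ (g ∘ T) y‖ₑ ≤ (1 + ‖T‖ₑ) * (‖g (T y)‖ₑ + ‖fderiv ℝ g (T y)‖ₑ) := by
  have chain : ‖fderiv ℝ (g ∘ T) y‖ₑ ≤ ‖T‖ₑ * ‖fderiv ℝ g (T y)‖ₑ := by
    rw [fderiv_comp y hg T.differentiableAt, T.fderiv, mul_comm]
    exact ContinuousLinearMap.opENorm_comp_le _ _
  calc ‖g (T y)‖ₑ + ‖fderiv ℝ (g ∘ T) y‖ₑ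
      ≤ 1 * ‖g (T y)‖ₑ + ‖T‖ₑ * ‖fderiv ℝ g (T y)‖ₑ := by rw [one_mul]; gcongr
    _ ≤ (1 + ‖T‖ₑ) * ‖g (T y)‖ₑ + (1 + ‖T‖ₑ) * ‖fderiv ℝ g (T y)‖ₑ := by
      gcongr
      exacts [le_self_add, le_add_self]
    _ = _ := (mul_add _ _ _).symm

lemma ennreal_add_rpow_two_le (a b : ℝ≥0∞) :
    (a + b) ^ (2 : ℝ) ≤ 2 * (a ^ (2 : ℝ) + b ^ (2 : ℝ)) := by
  have h := ENNReal.rpow_add_le_mul_rpow_add_rpow a b one_le_two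
  rwa [show (2 : ℝ) - 1 = 1 by norm_num, ENNReal.rpow_one] at h

lemma lintegral_enorm_sq_eq_ofReal_integral {α V : Type*} [MeasurableSpace α] {ν : Measure α}
    [NormedAddCommGroup V] {g : α → V} (hg : Integrable (fun x => ‖g x‖ ^ 2) ν) :
    ∫⁻ x, ‖g x‖ₑ ^ (2 : ℝ) ∂ν = ENNReal.ofReal (∫ x, ‖g x‖ ^ 2 ∂ν) := by
  rw [ofReal_integral_eq_lintegral_ofReal hg (.of_forall fun x => sq_nonneg _)]
  simp_rw [ENNReal.ofReal_pow (norm_nonneg _), ofReal_norm, ENNReal.rpow_two]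

section LineIntegrals

variable {V : Type*} [NormedAddCommGroup V] [NormedSpace ℝ V] [CompleteSpace V]

lemma enorm_le_setLIntegral_enorm_add_enorm_deriv {h h' : ℝ → V}
    (hd : ∀ s ∈ Icc (0 : ℝ) 1, HasDerivAt h (h' s) s) (hc : ContinuousOn h' (Icc 0 1)) :
    ‖h 0‖ₑ ≤ ∫⁻ s in Icc (0 : ℝ) 1, (‖h s‖ₑ + ‖h' s‖ₑ) := by
  have pointwise : ∀ s ∈ Icc (0 : ℝ) 1,
      ‖h 0‖ₑ ≤ ‖h s‖ₑ + ∫⁻ t in Icc (0 : ℝ) 1, ‖h' t‖ₑ := by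
    intro s hs
    have hsub : Icc 0 s ⊆ Icc (0 : ℝ) 1 := Icc_subset_Icc_right hs.2
    have ftc : ∫ t in (0 : ℝ)..s, h' t = h s - h 0 := by
      rw [← uIcc_of_le hs.1] at hsub
      exact intervalIntegral.integral_eq_sub_of_hasDerivAt (fun t ht => hd t (hsub ht))
        (hc.mono hsub).intervalIntegrable
    calc ‖h 0‖ₑ = ‖h s - ∫ t in (0 : ℝ)..s, h' t‖ₑ := by rw [ftc, sub_sub_cancel]
      _ ≤ ‖h s‖ₑ + ‖∫ t in (0 : ℝ)..s, h' t‖ₑ := enorm_sub_le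
      _ ≤ ‖h s‖ₑ + ∫⁻ t in Icc (0 : ℝ) 1, ‖h' t‖ₑ := by
        gcongr
        rw [intervalIntegral.integral_of_le hs.1]
        exact (enorm_integral_le_lintegral_enorm _).trans
          (lintegral_mono_set (Ioc_subset_Icc_self.trans hsub))
  have hm : AEMeasurable (fun s => ‖h s‖ₑ) (volume.restrict (Icc (0 : ℝ) 1)) :=
    (ContinuousOn.aestronglyMeasurable_of_isCompact
      (fun s hs => (hd s hs).continuousAt.continuousWithinAt) isCompact_Icc
      measurableSet_Icc).enorm
  calc ‖h 0‖ₑ = ∫⁻ _ in Icc (0 : ℝ) 1, ‖h 0‖ₑ := by simp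
    _ ≤ ∫⁻ s in Icc (0 : ℝ) 1, (‖h s‖ₑ + ∫⁻ t in Icc (0 : ℝ) 1, ‖h' t‖ₑ) :=
      setLIntegral_mono' measurableSet_Icc pointwise
    _ = ∫⁻ s in Icc (0 : ℝ) 1, (‖h s‖ₑ + ‖h' s‖ₑ) := by
      rw [lintegral_add_left' hm, lintegral_add_left' hm]
      simp

lemma enorm_le_setLIntegral_segment {E : Type*} [NormedAddCommGroup E] [NormedSpace ℝ E]
    {Ω : Set E} (hΩ : IsOpen Ω) {g : E → V} (hg : ContDiffOn ℝ 1 g Ω) {x v : E} (hv : ‖v‖ ≤ 1)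
    (hmem : ∀ s ∈ Icc (0 : ℝ) 1, x + s • v ∈ Ω) :
    ‖g x‖ₑ ≤ ∫⁻ s in Icc (0 : ℝ) 1, (‖g (x + s • v)‖ₑ + ‖fderiv ℝ g (x + s • v)‖ₑ) := by
  have hderiv : ∀ s ∈ Icc (0 : ℝ) 1,
      HasDerivAt (fun s : ℝ => g (x + s • v)) (fderiv ℝ g (x + s • v) v) s := by
    intro s hs
    have hline : HasDerivAt (fun s : ℝ => x + s • v) v s := by
      simpa using ((hasDerivAt_id s).smul_const v).const_add x
    exact ((hg.contDiffAt (hΩ.mem_nhds (hmem s hs))).differentiableAt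
      one_ne_zero).hasFDerivAt.comp_hasDerivAt s hline
  have hcont : ContinuousOn (fun s : ℝ => fderiv ℝ g (x + s • v) v) (Icc 0 1) :=
    ((hg.continuousOn_fderiv_of_isOpen hΩ le_rfl).comp (by fun_prop) hmem).clm_apply
      continuousOn_const
  calc ‖g x‖ₑ = ‖g (x + (0 : ℝ) • v)‖ₑ := by simp
    _ ≤ ∫⁻ s in Icc (0 : ℝ) 1, (‖g (x + s • v)‖ₑ + ‖fderiv ℝ g (x + s • v) v‖ₑ) :=
      enorm_le_setLIntegral_enorm_add_enorm_deriv hderiv hcont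
    _ ≤ ∫⁻ s in Icc (0 : ℝ) 1, (‖g (x + s • v)‖ₑ + ‖fderiv ℝ g (x + s • v)‖ₑ) := by
      gcongr with s
      rw [enorm_le_iff_norm_le]
      exact ContinuousLinearMap.le_of_opNorm_le_of_le _ le_rfl hv |>.trans_eq (mul_one _)

end LineIntegrals

section GagliardoNirenberg

variable {E : Type*} [NormedAddCommGroup E] [NormedSpace ℝ E] [MeasurableSpace E]

/-- The embedding `W^{1,1}(Ω) ⊂ L^q(Ω)` with constant `C`, tested on real functions that are `C¹`
on `Ω`. -/
def GagliardoNirenbergOn (μ : Measure E) (Ω : Set E) (q : ℝ) (C : ℝ≥0) : Prop :=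
  ∀ g : E → ℝ, ContDiffOn ℝ 1 g Ω →
    ∫⁻ x in Ω, ‖g x‖ₑ ^ q ∂μ ≤ (C * ∫⁻ x in Ω, (‖g x‖ₑ + ‖fderiv ℝ g x‖ₑ) ∂μ) ^ q

lemma enorm_le_lintegral_indicator_update {ι V : Type*} [Fintype ι] [DecidableEq ι]
    [NormedAddCommGroup V] [NormedSpace ℝ V] [CompleteSpace V]
    {O : Set (ι → ℝ)} (hO : IsOpen O) {g : (ι → ℝ) → V} (hg : ContDiffOn ℝ 1 g O) {y : ι → ℝ}
    {i : ι} (hray : ∀ s : ℝ, 0 ≤ s → y + s • Pi.single i 1 ∈ O) :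
    ‖g y‖ₑ ≤ ∫⁻ t, O.indicator (fun z => ‖g z‖ₑ + ‖fderiv ℝ g z‖ₑ) (Function.update y i t) := by
  set G : (ι → ℝ) → ℝ≥0∞ := O.indicator fun z => ‖g z‖ₑ + ‖fderiv ℝ g z‖ₑ
  have update_eq (s : ℝ) : y + s • Pi.single i 1 = Function.update y i (s + y i) := by
    ext j
    rcases eq_or_ne j i with rfl | hj <;> simp [*, add_comm]
  calc ‖g y‖ₑ
      ≤ ∫⁻ s in Icc (0 : ℝ) 1,
          (‖g (y + s • Pi.single i 1)‖ₑ + ‖fderiv ℝ g (y + s • Pi.single i 1)‖ₑ) :=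
        enorm_le_setLIntegral_segment hO hg (by simp [Pi.norm_single])
          fun s hs => hray s hs.1
    _ = ∫⁻ s in Icc (0 : ℝ) 1, G (y + s • Pi.single i 1) :=
        setLIntegral_congr_fun measurableSet_Icc fun s hs =>
          (indicator_of_mem (hray s hs.1) fun z => ‖g z‖ₑ + ‖fderiv ℝ g z‖ₑ).symm
    _ ≤ ∫⁻ s, G (y + s • Pi.single i 1) := setLIntegral_le_lintegral _ _
    _ = ∫⁻ t, G (Function.update y i t) := by
        simp_rw [update_eq]
        exact lintegral_add_right_eq_self (fun t => G (Function.update y i t)) (y i)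

/- The grid-lines lemma is applied to `‖g‖ + ‖∇g‖` extended by zero: its integral over each
coordinate line through `y ∈ O` dominates `‖g y‖`, because the forward half of the line
stays in `O`. -/
lemma gagliardoNirenbergOn_pi {ι : Type*} [Fintype ι] [DecidableEq ι] {O : Set (ι → ℝ)}
    (hO : IsOpen O) (hray : ∀ y ∈ O, ∀ i, ∀ s : ℝ, 0 ≤ s → y + s • Pi.single i 1 ∈ O)
    {q : ℝ} (hq : (Fintype.card ι : ℝ).HolderConjugate q) :
    GagliardoNirenbergOn volume O q 1 := by
  intro g hg
  set G : (ι → ℝ) → ℝ≥0∞ := O.indicator fun z => ‖g z‖ₑ + ‖fderiv ℝ g z‖ₑ with hG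
  have hGm : Measurable G := by
    classical
    rw [hG, ← piecewise_eq_indicator]
    exact (hg.continuousOn.enorm.add
      (hg.continuousOn_fderiv_of_isOpen hO le_rfl).enorm).measurable_piecewise
      continuousOn_const hO.measurableSet
  have hcard : 0 < (Fintype.card ι : ℝ) - 1 := sub_pos.2 hq.lt
  have card_mul : 1 / ((Fintype.card ι : ℝ) - 1) * Fintype.card ι = q := by
    rw [hq.conjugate_eq, one_div_mul_eq_div]
  have enorm_rpow_le : ∀ y ∈ O, ‖g y‖ₑ ^ q ≤
      ∏ i, (∫⁻ t, G (Function.update y i t)) ^ (1 / ((Fintype.card ι : ℝ) - 1)) := by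
    intro y hy
    calc ‖g y‖ₑ ^ q = ∏ _i : ι, ‖g y‖ₑ ^ (1 / ((Fintype.card ι : ℝ) - 1)) := by
          rw [Finset.prod_const, Finset.card_univ, ← ENNReal.rpow_mul_natCast, card_mul]
      _ ≤ _ := by
          gcongr with i
          exact enorm_le_lintegral_indicator_update hO hg (hray y hy i)
  calc ∫⁻ y in O, ‖g y‖ₑ ^ q
      ≤ ∫⁻ y in O, ∏ i, (∫⁻ t, G (Function.update y i t)) ^
          (1 / ((Fintype.card ι : ℝ) - 1)) :=
        setLIntegral_mono' hO.measurableSet enorm_rpow_le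
    _ ≤ ∫⁻ y, ∏ i, (∫⁻ t, G (Function.update y i t)) ^ (1 / ((Fintype.card ι : ℝ) - 1)) :=
        setLIntegral_le_lintegral _ _
    _ ≤ (∫⁻ y, G y) ^ q := lintegral_prod_lintegral_pow_le (fun _ => volume) hq hGm
    _ = (1 * ∫⁻ y in O, (‖g y‖ₑ + ‖fderiv ℝ g y‖ₑ)) ^ q := by
        rw [hG, lintegral_indicator hO.measurableSet, one_mul]

lemma exists_setLIntegral_eq_mul_comp_continuousLinearEquiv {E' : Type*} [NormedAddCommGroup E']
    [NormedSpace ℝ E'] [MeasurableSpace E'] [BorelSpace E'] [FiniteDimensional ℝ E'] [BorelSpace E]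
    (ν : Measure E') [ν.IsAddHaarMeasure] (μ : Measure E) [μ.IsAddHaarMeasure] (T : E' ≃L[ℝ] E) :
    ∃ c : ℝ≥0, c ≠ 0 ∧ ∀ (Ω : Set E) (F : E → ℝ≥0∞),
      ∫⁻ x in Ω, F x ∂μ = c * ∫⁻ y in T ⁻¹' Ω, F (T y) ∂ν := by
  have : FiniteDimensional ℝ E := T.toLinearEquiv.finiteDimensional
  have : ProperSpace E := FiniteDimensional.proper ℝ E
  set c := Measure.addHaarScalarFactor μ (ν.map T)
  have hμ : μ = c • ν.map T := Measure.isAddLeftInvariant_eq_smul μ (ν.map T)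
  have hT : MeasurePreserving T ν (ν.map T) := ⟨T.continuous.measurable, rfl⟩
  refine ⟨c, (Measure.addHaarScalarFactor_pos_of_isAddHaarMeasure μ (ν.map T)).ne', fun Ω F => ?_⟩
  rw [hT.setLIntegral_comp_preimage_emb T.toHomeomorph.measurableEmbedding F Ω]
  conv_lhs => rw [hμ]
  rw [Measure.restrict_smul, lintegral_smul_measure, ENNReal.smul_def, smul_eq_mul]

lemma exists_gagliardoNirenbergOn_of_preimage {E' : Type*} [NormedAddCommGroup E']
    [NormedSpace ℝ E'] [MeasurableSpace E'] [BorelSpace E'] [FiniteDimensional ℝ E'] [BorelSpace E]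
    (ν : Measure E') [ν.IsAddHaarMeasure] (μ : Measure E) [μ.IsAddHaarMeasure] (T : E' ≃L[ℝ] E)
    {q : ℝ} (hq : 0 < q) (C : ℝ≥0) :
    ∃ C' : ℝ≥0, ∀ Ω : Set E, IsOpen Ω →
      GagliardoNirenbergOn ν (T ⁻¹' Ω) q C → GagliardoNirenbergOn μ Ω q C' := by
  obtain ⟨c, hc, change⟩ := exists_setLIntegral_eq_mul_comp_continuousLinearEquiv ν μ T
  set K : ℝ≥0 := 1 + ‖(T : E' →L[ℝ] E)‖₊
  refine ⟨c ^ (1 / q) * (C * K) * c⁻¹, fun Ω hΩ h g hg => ?_⟩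
  set G : E → ℝ≥0∞ := fun x => ‖g x‖ₑ + ‖fderiv ℝ g x‖ₑ
  have hgT : ContDiffOn ℝ 1 (g ∘ T) (T ⁻¹' Ω) :=
    hg.comp T.contDiff.contDiffOn (mapsTo_preimage _ _)
  have hcomp : ∫⁻ y in T ⁻¹' Ω, (‖(g ∘ T) y‖ₑ + ‖fderiv ℝ (g ∘ T) y‖ₑ) ∂ν ≤
      K * ∫⁻ y in T ⁻¹' Ω, G (T y) ∂ν := by
    rw [← lintegral_const_mul' _ _ ENNReal.coe_ne_top]
    refine setLIntegral_mono' (hΩ.preimage T.continuous).measurableSet fun y hy => ?_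
    exact enorm_add_enorm_fderiv_comp_le (T := (T : E' →L[ℝ] E))
      ((hg.contDiffAt (hΩ.mem_nhds hy)).differentiableAt one_ne_zero)
  calc ∫⁻ x in Ω, ‖g x‖ₑ ^ q ∂μ
      = c * ∫⁻ y in T ⁻¹' Ω, ‖(g ∘ T) y‖ₑ ^ q ∂ν := change Ω _
    _ ≤ c * (C * (K * ∫⁻ y in T ⁻¹' Ω, G (T y) ∂ν)) ^ q := by
        gcongr
        refine (h _ hgT).trans ?_
        gcongr
    _ = (↑(c ^ (1 / q) * (C * K) * c⁻¹) * (c * ∫⁻ y in T ⁻¹' Ω, G (T y) ∂ν)) ^ q := by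
        have hroot : (c : ℝ≥0∞) = (↑(c ^ (1 / q)) : ℝ≥0∞) ^ q := by
          rw [← ENNReal.coe_rpow_of_nonneg _ hq.le, ← NNReal.rpow_mul, one_div_mul_cancel hq.ne',
            NNReal.rpow_one]
        have hcancel : (↑(c⁻¹ : ℝ≥0) : ℝ≥0∞) * c = 1 := by
          rw [← ENNReal.coe_mul, inv_mul_cancel₀ hc, ENNReal.coe_one]
        conv_lhs => rw [hroot, ← ENNReal.mul_rpow_of_nonneg _ _ hq.le]
        rw [ENNReal.coe_mul, ENNReal.coe_mul, ENNReal.coe_mul, ← mul_assoc _ (c : ℝ≥0∞),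
          mul_assoc _ (↑c⁻¹ : ℝ≥0∞), hcancel, mul_one]
        simp only [mul_assoc]
    _ = _ := by rw [change Ω G]

lemma exists_gagliardoNirenbergOn_of_basis [BorelSpace E] (μ : Measure E) [μ.IsAddHaarMeasure]
    {ι : Type*} [Fintype ι] (b : Module.Basis ι ℝ E) {q : ℝ}
    (hq : (Fintype.card ι : ℝ).HolderConjugate q) :
    ∃ C : ℝ≥0, ∀ Ω : Set E, IsOpen Ω → (∀ x ∈ Ω, ∀ i, ∀ s : ℝ, 0 ≤ s → x + s • b i ∈ Ω) →
      GagliardoNirenbergOn μ Ω q C := by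
  classical
  have : FiniteDimensional ℝ E := b.finiteDimensional_of_finite
  set T : (ι → ℝ) ≃L[ℝ] E := b.equivFunL.symm
  have hT (y : ι → ℝ) (i : ι) (s : ℝ) : T (y + s • Pi.single i 1) = T y + s • b i := by
    have hsingle : T (Pi.single i 1) = b i := by
      change b.equivFun.symm (Pi.single i 1) = b i
      simp
    rw [map_add, map_smul, hsingle]
  obtain ⟨C, hC⟩ := exists_gagliardoNirenbergOn_of_preimage volume μ T hq.symm.pos 1
  refine ⟨C, fun Ω hΩ hray => hC Ω hΩ <| gagliardoNirenbergOn_pi (hΩ.preimage T.continuous)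
    (fun y hy i s hs => ?_) hq⟩
  rw [mem_preimage, hT]
  exact hray _ hy i s hs

end GagliardoNirenberg

section LpBoundedExponents

variable {α : Type*} [MeasurableSpace α] {μ : Measure α} {u : α → ℝ≥0∞} {c : ℝ≥0∞}

/-- The exponents `p > 0` for which the `L^p(μ)` norm of `u` is at most `c`; the bound is raised to
the power `p` to avoid roots. -/
def lpBoundedExponents (μ : Measure α) (u : α → ℝ≥0∞) (c : ℝ≥0∞) : Set ℝ :=
  {p | 0 < p ∧ ∫⁻ x, u x ^ p ∂μ ≤ c ^ p}

lemma convex_lpBoundedExponents (hu : AEMeasurable u μ) : Convex ℝ (lpBoundedExponents μ u c) := by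
  rintro p ⟨hp, hp_le⟩ r ⟨hr, hr_le⟩ s t hs ht hst
  have rpow_split (z : ℝ≥0∞) : z ^ (s • p + t • r) = (z ^ p) ^ s * (z ^ r) ^ t := by
    rw [← ENNReal.rpow_mul, ← ENNReal.rpow_mul,
      ← ENNReal.rpow_add_of_nonneg _ _ (by positivity) (by positivity), smul_eq_mul, smul_eq_mul,
      mul_comm s, mul_comm t]
  refine ⟨convex_Ioi (0 : ℝ) (mem_Ioi.2 hp) (mem_Ioi.2 hr) hs ht hst, ?_⟩
  calc ∫⁻ x, u x ^ (s • p + t • r) ∂μ = ∫⁻ x, (u x ^ p) ^ s * (u x ^ r) ^ t ∂μ := by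
        simp_rw [rpow_split]
    _ ≤ (∫⁻ x, u x ^ p ∂μ) ^ s * (∫⁻ x, u x ^ r ∂μ) ^ t :=
        ENNReal.lintegral_mul_norm_pow_le (hu.pow_const _) (hu.pow_const _) hs ht hst
    _ ≤ (c ^ p) ^ s * (c ^ r) ^ t := by gcongr
    _ = c ^ (s • p + t • r) := (rpow_split c).symm

lemma continuousOn_ennreal_const_rpow (z : ℝ≥0∞) :
    ContinuousOn (fun p : ℝ => z ^ p) (Ioi 0) := by
  induction z with
  | top =>
    exact continuousOn_const.congr fun p hp => ENNReal.top_rpow_of_pos hp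
  | coe z =>
    have hcoe : EqOn (fun p : ℝ => (z : ℝ≥0∞) ^ p) (fun p => ((z ^ p : ℝ≥0) : ℝ≥0∞)) (Ioi 0) :=
      fun p hp => (ENNReal.coe_rpow_of_nonneg z (le_of_lt hp)).symm
    refine ContinuousOn.congr (fun p hp => ContinuousAt.continuousWithinAt ?_) hcoe
    exact ENNReal.continuous_coe.continuousAt.comp <|
      (NNReal.continuousAt_rpow (x := z) (.inr hp)).comp (Continuous.prodMk_right z).continuousAt

lemma isClosed_lpBoundedExponents_inter_Icc (hu : AEMeasurable u μ) {a b : ℝ} (ha : 0 < a) :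
    IsClosed (lpBoundedExponents μ u c ∩ Icc a b) := by
  refine IsSeqClosed.isClosed fun r p hr hrp => ?_
  have hp : p ∈ Icc a b := isClosed_Icc.mem_of_tendsto hrp (.of_forall fun n => (hr n).2)
  have hp0 : 0 < p := ha.trans_le hp.1
  have tendsto_rpow (z : ℝ≥0∞) : Tendsto (fun n => z ^ r n) atTop (𝓝 (z ^ p)) :=
    ((continuousOn_ennreal_const_rpow z).continuousAt (Ioi_mem_nhds hp0)).tendsto.comp hrp
  refine ⟨⟨hp0, ?_⟩, hp⟩
  calc ∫⁻ x, u x ^ p ∂μ = ∫⁻ x, liminf (fun n => u x ^ r n) atTop ∂μ := by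
        simp_rw [(tendsto_rpow _).liminf_eq]
    _ ≤ liminf (fun n => ∫⁻ x, u x ^ r n ∂μ) atTop :=
        lintegral_liminf_le' fun n => hu.pow_const _
    _ ≤ liminf (fun n => c ^ r n) atTop := liminf_le_liminf (.of_forall fun n => (hr n).1.2)
    _ = c ^ p := (tendsto_rpow c).liminf_eq

/- Continuous induction: the admissible exponents form a closed interval, and `hgain` leaves no
largest one below `p`. -/
lemma mem_lpBoundedExponents_of_forall_exists_gt (hu : AEMeasurable u μ) {a p : ℝ}
    (ha : a ∈ lpBoundedExponents μ u c) (hap : a ≤ p)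
    (hgain : ∀ r ∈ lpBoundedExponents μ u c, a ≤ r → r < p →
      ∃ r' ∈ lpBoundedExponents μ u c, r < r') :
    p ∈ lpBoundedExponents μ u c := by
  refine (isClosed_lpBoundedExponents_inter_Icc hu ha.1).Icc_subset_of_forall_exists_gt ha
    (fun r hr y hy => ?_) (right_mem_Icc.2 hap)
  obtain ⟨r', hr', hlt⟩ := hgain r hr.1 hr.2.1 hr.2.2
  have hmin : min r' y ∈ Ioc r y := ⟨lt_min hlt hy, min_le_right _ _⟩
  exact ⟨min r' y, (convex_lpBoundedExponents hu).ordConnected.out hr.1 hr'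
    ⟨hmin.1.le, min_le_left _ _⟩, hmin⟩

end LpBoundedExponents

section HOneNorm

variable {E F : Type*} [NormedAddCommGroup E] [NormedSpace ℝ E] [MeasurableSpace E]
  [NormedAddCommGroup F] [NormedSpace ℝ F]

/-- The `H¹` norm in the equivalent form `‖ |f| + |∇f| ‖_{L²(μ)}`, which is what the
Cauchy–Schwarz step of the bootstrap produces. -/
def hOneNorm (μ : Measure E) (f : E → F) : ℝ≥0∞ :=
  (∫⁻ x, (‖f x‖ₑ + ‖fderiv ℝ f x‖ₑ) ^ (2 : ℝ) ∂μ) ^ (1 / 2 : ℝ)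

lemma lintegral_enorm_sq_le_hOneNorm_sq (μ : Measure E) (f : E → F) :
    ∫⁻ x, ‖f x‖ₑ ^ (2 : ℝ) ∂μ ≤ hOneNorm μ f ^ (2 : ℝ) := by
  rw [hOneNorm, ← ENNReal.rpow_mul, one_div_mul_cancel two_ne_zero, ENNReal.rpow_one]
  gcongr
  exact le_self_add

lemma hOneNorm_le_ofReal {ν : Measure E} {f : E → F}
    (hf_meas : AEMeasurable (fun x => ‖f x‖ₑ) ν)
    (hf : Integrable (fun x => ‖f x‖ ^ 2) ν)
    (hdf : Integrable (fun x => ‖fderiv ℝ f x‖ ^ 2) ν) :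
    hOneNorm ν f ≤ ENNReal.ofReal
      (√2 * ((∫ x, ‖f x‖ ^ 2 ∂ν) + ∫ x, ‖fderiv ℝ f x‖ ^ 2 ∂ν) ^ (1 / 2 : ℝ)) := by
  have hf0 : 0 ≤ ∫ x, ‖f x‖ ^ 2 ∂ν := integral_nonneg fun x => sq_nonneg _
  have hdf0 : 0 ≤ ∫ x, ‖fderiv ℝ f x‖ ^ 2 ∂ν := integral_nonneg fun x => sq_nonneg _
  calc hOneNorm ν f
      ≤ (∫⁻ x, 2 * (‖f x‖ₑ ^ (2 : ℝ) + ‖fderiv ℝ f x‖ₑ ^ (2 : ℝ)) ∂ν) ^ (1 / 2 : ℝ) := by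
        unfold hOneNorm
        gcongr
        exact ennreal_add_rpow_two_le _ _
    _ = ENNReal.ofReal (2 * ((∫ x, ‖f x‖ ^ 2 ∂ν) + ∫ x, ‖fderiv ℝ f x‖ ^ 2 ∂ν)) ^
          (1 / 2 : ℝ) := by
        rw [lintegral_const_mul' _ _ ENNReal.ofNat_ne_top,
          lintegral_add_left' (hf_meas.pow_const _), lintegral_enorm_sq_eq_ofReal_integral hf,
          lintegral_enorm_sq_eq_ofReal_integral hdf, ← ENNReal.ofReal_add hf0 hdf0,
          ENNReal.ofReal_mul zero_le_two, ENNReal.ofReal_ofNat]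
    _ = _ := by
        rw [ENNReal.ofReal_rpow_of_nonneg (by positivity) (by positivity),
          Real.mul_rpow zero_le_two (by positivity), Real.sqrt_eq_rpow]

end HOneNorm

section SobolevBootstrap

variable {E F : Type*} [NormedAddCommGroup E] [NormedSpace ℝ E]
  [NormedAddCommGroup F] [InnerProductSpace ℝ F]

lemma enorm_norm_rpow_add_enorm_fderiv_le {f : E → F} {x : E} (hf : DifferentiableAt ℝ f x)
    {a : ℝ} (ha : 1 < a) :
    ‖‖f x‖ ^ a‖ₑ + ‖fderiv ℝ (fun y => ‖f y‖ ^ a) x‖ₑ ≤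
      ENNReal.ofReal a * (‖f x‖ₑ ^ (a - 1) * (‖f x‖ₑ + ‖fderiv ℝ f x‖ₑ)) := by
  have hvalue : ‖‖f x‖ ^ a‖ₑ = ‖f x‖ₑ ^ (a - 1) * ‖f x‖ₑ := by
    rw [Real.enorm_rpow_of_nonneg (norm_nonneg _) (by linarith), enorm_norm]
    have hsplit := ENNReal.rpow_add_of_nonneg (x := ‖f x‖ₑ) (a - 1) 1 (by linarith) zero_le_one
    rwa [sub_add_cancel, ENNReal.rpow_one] at hsplit
  have hderiv : ‖fderiv ℝ (fun y => ‖f y‖ ^ a) x‖ₑ ≤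
      ENNReal.ofReal a * (‖f x‖ₑ ^ (a - 1) * ‖fderiv ℝ f x‖ₑ) := by
    have hcomp : fderiv ℝ (fun y => ‖f y‖ ^ a) x =
        (fderiv ℝ (fun z : F => ‖z‖ ^ a) (f x)).comp (fderiv ℝ f x) :=
      fderiv_comp x (differentiable_norm_rpow ha _) hf
    have houter : ‖fderiv ℝ (fun z : F => ‖z‖ ^ a) (f x)‖ₑ =
        ENNReal.ofReal a * ‖f x‖ₑ ^ (a - 1) := by
      rw [← ofReal_norm, norm_fderiv_norm_id_rpow _ ha, ENNReal.ofReal_mul (by linarith),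
        ← ENNReal.ofReal_rpow_of_nonneg (norm_nonneg _) (by linarith), ofReal_norm]
    rw [hcomp, ← mul_assoc, ← houter]
    exact ContinuousLinearMap.opENorm_comp_le _ _
  have ha1 : 1 ≤ ENNReal.ofReal a := ENNReal.one_le_ofReal.2 ha.le
  rw [hvalue, mul_add, mul_add]
  exact add_le_add (le_mul_of_one_le_left' ha1) hderiv

variable [MeasurableSpace E] [BorelSpace E] {μ : Measure E} {Ω : Set E}
  {q : ℝ} {C : ℝ≥0} {f : E → F}

lemma GagliardoNirenbergOn.lintegral_enorm_rpow_le (hGN : GagliardoNirenbergOn μ Ω q C)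
    (hΩ : IsOpen Ω) (hq : 0 ≤ q) (hf : ContDiffOn ℝ 1 f Ω) {r : ℝ} (hr : 0 < r) :
    ∫⁻ x in Ω, ‖f x‖ₑ ^ ((1 + r / 2) * q) ∂μ ≤
      (C * (ENNReal.ofReal (1 + r / 2) *
        ((∫⁻ x in Ω, ‖f x‖ₑ ^ r ∂μ) ^ (1 / 2 : ℝ) * hOneNorm (μ.restrict Ω) f))) ^ q := by
  set a : ℝ := 1 + r / 2 with ha_def
  have ha : 1 < a := by linarith
  have hf_meas : AEMeasurable (fun x => ‖f x‖ₑ) (μ.restrict Ω) :=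
    hf.continuousOn.enorm.aemeasurable hΩ.measurableSet
  have hdf_meas : AEMeasurable (fun x => ‖fderiv ℝ f x‖ₑ) (μ.restrict Ω) :=
    (hf.continuousOn_fderiv_of_isOpen hΩ le_rfl).enorm.aemeasurable hΩ.measurableSet
  calc ∫⁻ x in Ω, ‖f x‖ₑ ^ (a * q) ∂μ = ∫⁻ x in Ω, ‖‖f x‖ ^ a‖ₑ ^ q ∂μ := by
        simp_rw [Real.enorm_rpow_of_nonneg (norm_nonneg _) (zero_le_one.trans ha.le), enorm_norm,
          ENNReal.rpow_mul]
    _ ≤ (C * ∫⁻ x in Ω, (‖‖f x‖ ^ a‖ₑ + ‖fderiv ℝ (fun y => ‖f y‖ ^ a) x‖ₑ) ∂μ) ^ q :=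
        hGN _ ((contDiff_norm_rpow ha).comp_contDiffOn hf)
    _ ≤ (C * ∫⁻ x in Ω, ENNReal.ofReal a *
          (‖f x‖ₑ ^ (r / 2) * (‖f x‖ₑ + ‖fderiv ℝ f x‖ₑ)) ∂μ) ^ q := by
        gcongr ((C : ℝ≥0∞) * ?_) ^ q
        refine setLIntegral_mono' hΩ.measurableSet fun x hx => ?_
        have hx_diff : DifferentiableAt ℝ f x :=
          (hf.contDiffAt (hΩ.mem_nhds hx)).differentiableAt one_ne_zero
        simpa only [ha_def, add_sub_cancel_left] using
          enorm_norm_rpow_add_enorm_fderiv_le hx_diff ha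
    _ ≤ _ := by
        rw [lintegral_const_mul' _ _ ENNReal.ofReal_ne_top]
        gcongr
        refine (ENNReal.lintegral_mul_le_Lp_mul_Lq _ Real.HolderConjugate.two_two
          (hf_meas.pow_const _) (hf_meas.add hdf_meas)).trans_eq ?_
        simp_rw [hOneNorm, ← ENNReal.rpow_mul, div_mul_cancel₀ r two_ne_zero]
        rfl

lemma GagliardoNirenbergOn.lintegral_enorm_rpow_le_hOneNorm_rpow
    (hGN : GagliardoNirenbergOn μ Ω q C) (hΩ : IsOpen Ω) (hq : 0 < q) {p : ℝ} (hp : 2 ≤ p)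
    (hpq : p * (2 - q) ≤ 2 * q) (hf : ContDiffOn ℝ 1 f Ω) :
    ∫⁻ x in Ω, ‖f x‖ₑ ^ p ∂μ ≤
      ((1 + C) * ENNReal.ofReal (1 + p / 2) * hOneNorm (μ.restrict Ω) f) ^ p := by
  set N := hOneNorm (μ.restrict Ω) f
  set c : ℝ≥0∞ := (1 + C) * ENNReal.ofReal (1 + p / 2) * N
  have hN : N ≤ c := by
    refine le_mul_of_one_le_left' (one_le_mul le_self_add ?_)
    exact ENNReal.one_le_ofReal.2 (by linarith)
  have two_mem : (2 : ℝ) ∈ lpBoundedExponents (μ.restrict Ω) (fun x => ‖f x‖ₑ) c :=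
    ⟨two_pos, (lintegral_enorm_sq_le_hOneNorm_sq _ f).trans (by gcongr)⟩
  have gain : ∀ r ∈ lpBoundedExponents (μ.restrict Ω) (fun x => ‖f x‖ₑ) c, 2 ≤ r → r < p →
      ∃ r' ∈ lpBoundedExponents (μ.restrict Ω) (fun x => ‖f x‖ₑ) c, r < r' := by
    rintro r ⟨hr, hr_le⟩ - hrp
    refine ⟨(1 + r / 2) * q, ⟨by positivity, ?_⟩, by rcases le_total q 2 <;> nlinarith⟩
    calc ∫⁻ x in Ω, ‖f x‖ₑ ^ ((1 + r / 2) * q) ∂μ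
        ≤ (C * (ENNReal.ofReal (1 + r / 2) *
            ((∫⁻ x in Ω, ‖f x‖ₑ ^ r ∂μ) ^ (1 / 2 : ℝ) * N))) ^ q :=
          hGN.lintegral_enorm_rpow_le hΩ hq.le hf hr
      _ ≤ ((1 + C) * (ENNReal.ofReal (1 + p / 2) * ((c ^ r) ^ (1 / 2 : ℝ) * N))) ^ q := by
          gcongr
          exact le_add_self
      _ = c ^ ((1 + r / 2) * q) := by
          rw [ENNReal.rpow_mul c, ENNReal.rpow_add_of_nonneg _ _ zero_le_one (by positivity),
            ENNReal.rpow_one, ← ENNReal.rpow_mul, mul_one_div]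
          congr 1
          simp only [c]
          ring
  exact (mem_lpBoundedExponents_of_forall_exists_gt
    (hf.continuousOn.enorm.aemeasurable hΩ.measurableSet) two_mem hp gain).2

end SobolevBootstrap

theorem exists_lp_le_of_forall_add_smul_basis_mem {ι E F : Type*} [Fintype ι]
    [NormedAddCommGroup E] [NormedSpace ℝ E] [MeasurableSpace E] [BorelSpace E] (μ : Measure E)
    [μ.IsAddHaarMeasure] [NormedAddCommGroup F] [InnerProductSpace ℝ F] (b : Module.Basis ι ℝ E)
    (hι : 2 ≤ Fintype.card ι) {p : ℝ} (hp2 : 2 ≤ p)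
    (hp : p * (Fintype.card ι - 2) ≤ 2 * Fintype.card ι) :
    ∃ C : ℝ, 0 < C ∧
      ∀ Ω : Set E, IsOpen Ω → (∀ x ∈ Ω, ∀ i, ∀ s : ℝ, 0 ≤ s → x + s • b i ∈ Ω) →
      ∀ f : E → F, ContDiffOn ℝ 1 f Ω →
        IntegrableOn (fun x => ‖f x‖ ^ 2) Ω μ →
        IntegrableOn (fun x => ‖fderiv ℝ f x‖ ^ 2) Ω μ →
        (∫⁻ x in Ω, ENNReal.ofReal (‖f x‖ ^ p) ∂μ) ^ (1 / p) ≤ ENNReal.ofReal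
          (C * ((∫ x in Ω, ‖f x‖ ^ 2 ∂μ) + ∫ x in Ω, ‖fderiv ℝ f x‖ ^ 2 ∂μ) ^ (1 / 2 : ℝ)) := by
  set d : ℝ := (Fintype.card ι : ℝ)
  have hd : 2 ≤ d := Nat.ofNat_le_cast.2 hι
  have hdq : d.HolderConjugate (d / (d - 1)) := .conjExponent (by linarith)
  have hpq : p * (2 - d / (d - 1)) ≤ 2 * (d / (d - 1)) := by
    have : 0 < d - 1 := by linarith
    rw [show 2 - d / (d - 1) = (d - 2) / (d - 1) by field_simp; ring, ← mul_div_assoc,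
      ← mul_div_assoc]
    gcongr
  obtain ⟨C, hC⟩ := exists_gagliardoNirenbergOn_of_basis μ b hdq
  refine ⟨(1 + C) * (1 + p / 2) * √2, by positivity,
    fun Ω hΩ hray f hf hf_int hdf_int => ?_⟩
  have hGN := hC Ω hΩ hray
  have hK : ENNReal.ofReal ((1 + C) * (1 + p / 2)) = (1 + C) * ENNReal.ofReal (1 + p / 2) := by
    rw [ENNReal.ofReal_mul (by positivity), ENNReal.ofReal_add zero_le_one C.coe_nonneg,
      ENNReal.ofReal_one, ENNReal.ofReal_coe_nnreal]
  calc (∫⁻ x in Ω, ENNReal.ofReal (‖f x‖ ^ p) ∂μ) ^ (1 / p)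
      = (∫⁻ x in Ω, ‖f x‖ₑ ^ p ∂μ) ^ (1 / p) := by
        simp_rw [← ENNReal.ofReal_rpow_of_nonneg (norm_nonneg _) (zero_le_two.trans hp2),
          ofReal_norm]
    _ ≤ (1 + C) * ENNReal.ofReal (1 + p / 2) * hOneNorm (μ.restrict Ω) f := by
        rw [one_div, ENNReal.rpow_inv_le_iff (by positivity)]
        exact hGN.lintegral_enorm_rpow_le_hOneNorm_rpow hΩ hdq.symm.pos hp2 hpq hf
    _ ≤ _ := by
        rw [mul_assoc _ √2, ENNReal.ofReal_mul (by positivity), hK]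
        gcongr
        exact hOneNorm_le_ofReal
          (hf.continuousOn.enorm.aemeasurable hΩ.measurableSet) hf_int hdf_int

section BoundedDerivatives

lemma enorm_fderiv_iteratedFDeriv {E V : Type*} [NormedAddCommGroup E] [NormedSpace ℝ E]
    [NormedAddCommGroup V] [NormedSpace ℝ V] {g : E → V} {k : ℕ} {x : E} :
    ‖fderiv ℝ (iteratedFDeriv ℝ k g) x‖ₑ = ‖iteratedFDeriv ℝ (k + 1) g x‖ₑ := by
  rw [← ofReal_norm, norm_fderiv_iteratedFDeriv, ofReal_norm]

lemma rpow_two_setLIntegral_Icc_le {F : ℝ → ℝ≥0∞}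
    (hF : AEMeasurable F (volume.restrict (Icc 0 1))) :
    (∫⁻ s in Icc (0 : ℝ) 1, F s) ^ (2 : ℝ) ≤ ∫⁻ s in Icc (0 : ℝ) 1, F s ^ (2 : ℝ) := by
  have holder := ENNReal.lintegral_mul_le_Lp_mul_Lq (volume.restrict (Icc (0 : ℝ) 1))
    Real.HolderConjugate.two_two hF (aemeasurable_const (b := 1))
  simp only [Pi.mul_apply, mul_one, ENNReal.one_rpow, setLIntegral_one, Real.volume_Icc, sub_zero,
    ENNReal.ofReal_one] at holder
  rwa [one_div, ENNReal.le_rpow_inv_iff two_pos] at holder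

lemma rpow_two_enorm_le_lintegral_line {E V : Type*} [NormedAddCommGroup E] [NormedSpace ℝ E]
    [NormedAddCommGroup V] [NormedSpace ℝ V] [CompleteSpace V] {g : E → V} (hg : ContDiff ℝ 1 g)
    (x : E) {v : E} (hv : ‖v‖ ≤ 1) :
    ‖g x‖ₑ ^ (2 : ℝ) ≤
      2 * ∫⁻ s : ℝ, (‖g (x + s • v)‖ₑ ^ (2 : ℝ) + ‖fderiv ℝ g (x + s • v)‖ₑ ^ (2 : ℝ)) := by
  have hcont : Continuous fun s : ℝ => ‖g (x + s • v)‖ₑ + ‖fderiv ℝ g (x + s • v)‖ₑ := by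
    have := hg.continuous
    have := hg.continuous_fderiv one_ne_zero
    fun_prop
  calc ‖g x‖ₑ ^ (2 : ℝ)
      ≤ (∫⁻ s in Icc (0 : ℝ) 1, (‖g (x + s • v)‖ₑ + ‖fderiv ℝ g (x + s • v)‖ₑ)) ^ (2 : ℝ) := by
        gcongr
        exact enorm_le_setLIntegral_segment isOpen_univ hg.contDiffOn hv fun s _ => mem_univ _
    _ ≤ ∫⁻ s in Icc (0 : ℝ) 1,
          (‖g (x + s • v)‖ₑ + ‖fderiv ℝ g (x + s • v)‖ₑ) ^ (2 : ℝ) :=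
        rpow_two_setLIntegral_Icc_le hcont.aemeasurable
    _ ≤ ∫⁻ s : ℝ, (‖g (x + s • v)‖ₑ + ‖fderiv ℝ g (x + s • v)‖ₑ) ^ (2 : ℝ) :=
        setLIntegral_le_lintegral _ _
    _ ≤ ∫⁻ s : ℝ,
          2 * (‖g (x + s • v)‖ₑ ^ (2 : ℝ) + ‖fderiv ℝ g (x + s • v)‖ₑ ^ (2 : ℝ)) := by
        gcongr
        exact ennreal_add_rpow_two_le _ _
    _ = _ := lintegral_const_mul' _ _ ENNReal.ofNat_ne_top

/- With `u k` the size of the `k`-th derivative, `hline` integrates out one coordinate at the price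
of one derivative. -/
lemma le_lmarginal_of_le_lintegral_update {ι : Type*} [DecidableEq ι] {X : ι → Type*}
    [∀ i, MeasurableSpace (X i)] {μ : ∀ i, Measure (X i)} [∀ i, SigmaFinite (μ i)]
    {u : ℕ → (∀ i, X i) → ℝ≥0∞} {U : (∀ i, X i) → ℝ≥0∞} {K : ℝ≥0} {n : ℕ} (hU : Measurable U)
    (hle : ∀ k ≤ n, u k ≤ U)
    (hline : ∀ k < n, ∀ i x, u k x ≤
      K * ∫⁻ t, (u k (Function.update x i t) + u (k + 1) (Function.update x i t)) ∂μ i)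
    (s : Finset ι) {k : ℕ} (hk : k + s.card ≤ n) (x : ∀ i, X i) :
    u k x ≤ (2 * K) ^ s.card * (∫⋯∫⁻_s, U ∂μ) x := by
  induction s using Finset.induction_on generalizing k x with
  | empty => simpa using hle k hk x
  | insert i s hi ih =>
    rw [Finset.card_insert_of_notMem hi] at hk ⊢
    set c : ℝ≥0∞ := (2 * K) ^ s.card
    have hc : c ≠ ∞ := by finiteness
    calc u k x
        ≤ K * ∫⁻ t, (u k (Function.update x i t) + u (k + 1) (Function.update x i t)) ∂μ i :=
          hline k (by lia) i x
      _ ≤ K * ∫⁻ t, (2 * c) * (∫⋯∫⁻_s, U ∂μ) (Function.update x i t) ∂μ i := by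
          gcongr with t
          rw [mul_assoc, two_mul]
          exact add_le_add (ih (by lia) _) (ih (by lia) _)
      _ = (2 * K) ^ (s.card + 1) * (∫⋯∫⁻_insert i s, U ∂μ) x := by
          rw [lintegral_const_mul' _ _ (by finiteness), lmarginal_insert _ hU hi, pow_succ]
          ring

variable {ι V : Type*} [Fintype ι] [NormedAddCommGroup V] [NormedSpace ℝ V] [CompleteSpace V]
  {g : EuclideanSpace ℝ ι → V}

lemma rpow_two_enorm_le_lintegral_update [DecidableEq ι] (hg : ContDiff ℝ 1 g) (i : ι)
    (y : ι → ℝ) :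
    ‖g (WithLp.toLp 2 y)‖ₑ ^ (2 : ℝ) ≤ 2 * ∫⁻ t : ℝ,
      (‖g (WithLp.toLp 2 (Function.update y i t))‖ₑ ^ (2 : ℝ) +
        ‖fderiv ℝ g (WithLp.toLp 2 (Function.update y i t))‖ₑ ^ (2 : ℝ)) := by
  have update_eq (s : ℝ) : WithLp.toLp 2 y + s • EuclideanSpace.single i 1 =
      WithLp.toLp 2 (Function.update y i (s + y i)) := by
    ext j
    rcases eq_or_ne j i with rfl | hj <;> simp [*, add_comm]
  have hline := rpow_two_enorm_le_lintegral_line hg (WithLp.toLp 2 y)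
    (v := EuclideanSpace.single i 1) (by simp)
  simp_rw [update_eq] at hline
  rwa [lintegral_add_right_eq_self (fun t =>
    ‖g (WithLp.toLp 2 (Function.update y i t))‖ₑ ^ (2 : ℝ) +
      ‖fderiv ℝ g (WithLp.toLp 2 (Function.update y i t))‖ₑ ^ (2 : ℝ)) (y i)] at hline

lemma rpow_two_enorm_iteratedFDeriv_le_lintegral (j : ℕ)
    (hg : ContDiff ℝ (j + Fintype.card ι : ℕ) g) (x : EuclideanSpace ℝ ι) :
    ‖iteratedFDeriv ℝ j g x‖ₑ ^ (2 : ℝ) ≤ 4 ^ Fintype.card ι *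
      ∫⁻ y, ∑ k ∈ Finset.range (Fintype.card ι + 1), ‖iteratedFDeriv ℝ (j + k) g y‖ₑ ^ (2 : ℝ) := by
  classical
  set u : ℕ → EuclideanSpace ℝ ι → ℝ≥0∞ := fun k y => ‖iteratedFDeriv ℝ (j + k) g y‖ₑ ^ (2 : ℝ)
  set U : EuclideanSpace ℝ ι → ℝ≥0∞ := fun y => ∑ k ∈ Finset.range (Fintype.card ι + 1), u k y
  have hU : Measurable U := Finset.measurable_fun_sum _ fun k hk =>
    (hg.continuous_iteratedFDeriv (mod_cast by grind)).enorm.measurable.pow_const _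
  have hu_le : ∀ k ≤ Fintype.card ι, (fun y => u k (WithLp.toLp 2 y)) ≤
      fun y => U (WithLp.toLp 2 y) := fun k hk y =>
    Finset.single_le_sum (f := fun k => u k (WithLp.toLp 2 y)) (fun _ _ => zero_le)
      (Finset.mem_range_succ_iff.2 hk)
  have hu_line : ∀ k < Fintype.card ι, ∀ i (y : ι → ℝ), u k (WithLp.toLp 2 y) ≤ (2 : ℝ≥0) *
      ∫⁻ t, (u k (WithLp.toLp 2 (Function.update y i t)) +
        u (k + 1) (WithLp.toLp 2 (Function.update y i t))) := fun k hk i y => by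
    have hline := rpow_two_enorm_le_lintegral_update
      (hg.iteratedFDeriv_right (i := j + k) (m := 1) (mod_cast by lia)) i y
    simp only [enorm_fderiv_iteratedFDeriv] at hline
    exact hline
  calc u 0 x ≤ (2 * (2 : ℝ≥0)) ^ Fintype.card ι *
        (∫⋯∫⁻_Finset.univ, (fun y => U (WithLp.toLp 2 y)) ∂fun _ => volume) x.ofLp :=
        le_lmarginal_of_le_lintegral_update (hU.comp (WithLp.measurable_toLp 2 _)) hu_le hu_line
          Finset.univ (zero_add _).le x.ofLp
    _ = 4 ^ Fintype.card ι * ∫⁻ y, U y := by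
        rw [show (2 * (2 : ℝ≥0) : ℝ≥0∞) = 4 by norm_num, lmarginal_univ,
          ← (PiLp.volume_preserving_toLp ι).lintegral_comp hU, volume_pi]

lemma exists_nnnorm_iteratedFDeriv_le (j : ℕ) (hg : ContDiff ℝ (j + Fintype.card ι : ℕ) g)
    (hint : ∀ k ≤ Fintype.card ι, Integrable fun x => ‖iteratedFDeriv ℝ (j + k) g x‖ ^ 2) :
    ∃ B : ℝ≥0, ∀ x, ‖iteratedFDeriv ℝ j g x‖₊ ≤ B := by
  set I : ℝ≥0∞ := ∫⁻ y, ∑ k ∈ Finset.range (Fintype.card ι + 1),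
    ‖iteratedFDeriv ℝ (j + k) g y‖ₑ ^ (2 : ℝ)
  have hmeas : ∀ k ∈ Finset.range (Fintype.card ι + 1),
      Measurable fun y => ‖iteratedFDeriv ℝ (j + k) g y‖ₑ ^ (2 : ℝ) := fun k hk =>
    (hg.continuous_iteratedFDeriv (mod_cast by grind)).enorm.measurable.pow_const _
  have hI : I ≠ ∞ := by
    rw [show I = _ from lintegral_finsetSum _ hmeas]
    refine ENNReal.sum_ne_top.2 fun k hk => ?_
    rw [lintegral_enorm_sq_eq_ofReal_integral (hint k (Finset.mem_range_succ_iff.1 hk))]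
    exact ENNReal.ofReal_ne_top
  set c : ℝ≥0∞ := 4 ^ Fintype.card ι * I
  have hc : c ≠ ∞ := by finiteness
  refine ⟨(c ^ (1 / 2 : ℝ)).toNNReal, fun x => ?_⟩
  rw [← ENNReal.coe_le_coe, ENNReal.coe_toNNReal (by finiteness), ← enorm_eq_nnnorm, one_div,
    ENNReal.le_rpow_inv_iff two_pos]
  exact rpow_two_enorm_iteratedFDeriv_le_lintegral j hg x

lemma exists_lipschitzWith_of_integrable_iteratedFDeriv
    (hg : ContDiff ℝ (1 + Fintype.card ι : ℕ) g)
    (hint : ∀ k ≤ Fintype.card ι, Integrable fun x => ‖iteratedFDeriv ℝ (1 + k) g x‖ ^ 2) :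
    ∃ L : ℝ≥0, LipschitzWith L g := by
  obtain ⟨L, hL⟩ := exists_nnnorm_iteratedFDeriv_le 1 hg hint
  refine ⟨L, lipschitzWith_of_nnnorm_fderiv_le (hg.differentiable (mod_cast by lia)) fun x => ?_⟩
  rw [← NNReal.coe_le_coe, coe_nnnorm, ← norm_iteratedFDeriv_one]
  exact hL x

end BoundedDerivatives

section Epigraph

variable {M : E2 → ℝ}

lemma isLinearMap_proj2 : IsLinearMap ℝ proj2 where
  map_add x y := by ext i; fin_cases i <;> rfl
  map_smul s x := by ext i; fin_cases i <;> rfl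

lemma continuous_proj2 : Continuous proj2 :=
  isLinearMap_proj2.mk'.continuous_of_finiteDimensional

lemma isOpen_Omg (hM : Continuous M) : IsOpen (Omg M) :=
  isOpen_lt (hM.comp continuous_proj2) (by fun_prop)

lemma add_mem_Omg {L : ℝ≥0} (hM : LipschitzWith L M) {x w : E3} (hx : x ∈ Omg M)
    (hw : L * ‖proj2 w‖ ≤ w 0) : x + w ∈ Omg M := by
  have hlip : |M (proj2 x + proj2 w) - M (proj2 x)| ≤ L * ‖proj2 w‖ := by
    simpa [dist_eq_norm] using hM.dist_le_mul (proj2 x + proj2 w) (proj2 x)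
  have hx' : M (proj2 x) < x 0 := hx
  change M (proj2 (x + w)) < x 0 + w 0
  rw [isLinearMap_proj2.map_add]
  linarith [le_abs_self (M (proj2 x + proj2 w) - M (proj2 x))]

lemma linearIndependent_conical (L : ℝ) :
    LinearIndependent ℝ (![!₂[1, 0, 0], !₂[L, 1, 0], !₂[L, 0, 1]] : Fin 3 → E3) := by
  rw [Fintype.linearIndependent_iff]
  intro c hc
  simp only [Fin.sum_univ_three] at hc
  have h0 : c 0 + c 1 * L + c 2 * L = 0 := by simpa using congrArg (· 0) hc
  have h1 : c 1 = 0 := by simpa using congrArg (· 1) hc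
  have h2 : c 2 = 0 := by simpa using congrArg (· 2) hc
  have h0' : c 0 = 0 := by simpa [h1, h2] using h0
  intro i
  fin_cases i <;> assumption

/-- The basis `e₁, e₂ + L e₁, e₃ + L e₁` of `ℝ³`. For an `L`-Lipschitz `M`, the domain `Omg M` is
stable under translation along non-negative multiples of each of its vectors. -/
def conicalBasis (L : ℝ) : Module.Basis (Fin 3) ℝ E3 :=
  basisOfLinearIndependentOfCardEqFinrank (linearIndependent_conical L) (by simp)

lemma add_smul_conicalBasis_mem_Omg {L : ℝ≥0} (hM : LipschitzWith L M) {x : E3} (hx : x ∈ Omg M)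
    (i : Fin 3) {s : ℝ} (hs : 0 ≤ s) : x + s • conicalBasis L i ∈ Omg M := by
  have hcone : L * ‖proj2 (conicalBasis L i)‖ ≤ conicalBasis L i 0 := by
    fin_cases i <;> simp [conicalBasis, proj2, EuclideanSpace.norm_eq]
  refine add_mem_Omg hM hx ?_
  rw [isLinearMap_proj2.map_smul, norm_smul, Real.norm_of_nonneg hs, mul_left_comm]
  exact mul_le_mul_of_nonneg_left hcone hs

end Epigraph

theorem sobolev_Lp_embedding_general {F : Type*} [NormedAddCommGroup F] [InnerProductSpace ℝ F]
    (L : ℝ≥0) {p : ℝ} (hp2 : 2 ≤ p) (hp6 : p ≤ 6) :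
    ∃ C : ℝ, 0 < C ∧ ∀ M : E2 → ℝ, LipschitzWith L M →
      ∀ f : E3 → F, ContDiffOn ℝ 1 f (Omg M) →
        IntegrableOn (fun x => ‖f x‖ ^ 2) (Omg M) →
        IntegrableOn (fun x => ‖fderiv ℝ f x‖ ^ 2) (Omg M) →
        (∫⁻ x in Omg M, ENNReal.ofReal (‖f x‖ ^ p)) ^ (1 / p) ≤ ENNReal.ofReal
          (C * ((∫ x in Omg M, ‖f x‖ ^ 2) + ∫ x in Omg M, ‖fderiv ℝ f x‖ ^ 2) ^ (1 / 2 : ℝ)) := by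
  obtain ⟨C, hC, hbound⟩ := exists_lp_le_of_forall_add_smul_basis_mem (F := F) volume
    (conicalBasis L) (by simp) hp2 (by norm_num; linarith)
  exact ⟨C, hC, fun M hM => hbound (Omg M) (isOpen_Omg hM.continuous)
    fun x hx i s => add_smul_conicalBasis_mem_Omg hM hx i⟩

theorem sobolev_Lp_embedding (M : E2 → ℝ) (hM : ContDiff ℝ (⊤ : ℕ∞) M)
    (hMint : ∀ j ≤ 9, Integrable fun x' : E2 => ‖iteratedFDeriv ℝ j M x'‖ ^ 2)
    (p : ℝ) (hp2 : 2 ≤ p) (hp6 : p < 6) :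
    ∃ C : ℝ, 0 < C ∧
      ∀ f : E3 → ℝ, ContDiffOn ℝ 1 f (closure (Omg M)) →
        IntegrableOn (fun x => f x ^ 2) (Omg M) →
        IntegrableOn (fun x => ‖fderiv ℝ f x‖ ^ 2) (Omg M) →
        (∫⁻ x in Omg M, ENNReal.ofReal (|f x| ^ p)) ^ (1 / p) ≤
          ENNReal.ofReal
            (C * ((∫ x in Omg M, f x ^ 2) + ∫ x in Omg M, ‖fderiv ℝ f x‖ ^ 2) ^ (1/2 : ℝ)) := by
  obtain ⟨L, hL⟩ := exists_lipschitzWith_of_integrable_iteratedFDeriv (hM.of_le (mod_cast le_top))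
    fun k hk => hMint (1 + k) (by rw [Fintype.card_fin] at hk; lia)
  obtain ⟨C, hC, hbound⟩ := sobolev_Lp_embedding_general (F := ℝ) L hp2 hp6.le
  simp only [Real.norm_eq_abs, sq_abs] at hbound
  exact ⟨C, hC, fun f hf => hbound M hL f (hf.mono subset_closure)⟩
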